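/- Let M be a cancellative noetherian monoid in which left- and right-divisibility are partial orders, with a Garside element Δ (a balanced element whose divisor set generates M). If δ ∈ Div(Δ) is balanced and the submonoid M_δ generated by Div(δ) satisfies M_δ ∩ Div(Δ) = Div(δ), then M_δ is itself a Garside monoid with Garside element δ. -/

import Mathlib

section Garside

variable {M : Type*} [Monoid M]

/-- Left divisibility: `a` left-divides `b`. -/
def LDvd (a b : M) : Prop := ∃ c, b = a * c

/-- Right divisibility: `a` right-divides `b`. -/
def RDvd (a b : M) : Prop := ∃ c, b = c * a

/-- The set of left divisors of `d`. -/
def LDiv (d : M) : Set M := {a | LDvd a d}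

/-- The set of right divisors of `d`. -/
def RDiv (d : M) : Set M := {a | RDvd a d}

/-- An element is balanced if its left and right divisors coincide. -/
def BalancedElem (d : M) : Prop := LDiv d = RDiv d

/-- `l` is a least common multiple of `a` and `b` for left divisibility (a right lcm). -/
def IsLcmL (a b l : M) : Prop := LDvd a l ∧ LDvd b l ∧ ∀ m, LDvd a m → LDvd b m → LDvd l m

/-- `l` is a least common multiple of `a` and `b` for right divisibility (a left lcm). -/
def IsLcmR (a b l : M) : Prop := RDvd a l ∧ RDvd b l ∧ ∀ m, RDvd a m → RDvd b m → RDvd l m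

/-- Cancellativity: `xyz = xtz` implies `y = t`. -/
def CancellativeMonoid (M : Type*) [Monoid M] : Prop :=
  ∀ x y z t : M, x * y * z = x * t * z → y = t

/-- Noetherianity: well-foundedness of strict left and right divisibility. -/
def NoetherianMonoid (M : Type*) [Monoid M] : Prop :=
  WellFounded (fun a b : M => LDvd a b ∧ ¬ LDvd b a) ∧
    WellFounded (fun a b : M => RDvd a b ∧ ¬ RDvd b a)

/-- `M` is locally Garside: cancellative, noetherian, and two elements admit a common
multiple for left (resp. right) divisibility iff they admit an lcm. -/
def LocallyGarside (M : Type*) [Monoid M] : Prop :=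
  CancellativeMonoid M ∧ NoetherianMonoid M ∧
    (∀ a b : M, (∃ m, LDvd a m ∧ LDvd b m) ↔ (∃ l, IsLcmL a b l)) ∧
    (∀ a b : M, (∃ m, RDvd a m ∧ RDvd b m) ↔ (∃ l, IsLcmR a b l))

/-- `M` is a Garside monoid with Garside element `d`: it is locally Garside, `d` is
balanced and the divisors of `d` generate `M`. -/
def IsGarsideMonoidWith (d : M) : Prop :=
  LocallyGarside M ∧ BalancedElem d ∧ Submonoid.closure (LDiv d) = ⊤

end Garside

/-!
Let `l = x * c = y * d` be a right lcm of two divisors `x`, `y` of a balanced element `δ`. Then `l`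
divides `δ` on the left, hence on the right, so its right factors `c` and `d` divide `δ` as well.
Pasting such lcm squares into a grid shows that any two elements of the submonoid `M_δ` generated
by `Div(δ)` have a right lcm in `M`, with both complements again in `M_δ`. Consequently the
divisibility relations of `M` and of `M_δ` agree on `M_δ`, and these lcms are lcms in `M_δ`.
The statements about right divisibility follow by passing to the opposite monoid.
-/

section Divisibility

variable {M : Type*} [Monoid M]

theorem LDvd.trans {a b c : M} (hab : LDvd a b) (hbc : LDvd b c) : LDvd a c :=
  dvd_trans hab hbc

theorem ldvd_mul_left_iff [IsLeftCancelMul M] {a b c : M} :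
    LDvd (a * b) (a * c) ↔ LDvd b c := by
  simp only [LDvd, mul_assoc, mul_right_inj]

theorem ldvd_of_isUnit {u : M} (hu : IsUnit u) (a : M) : LDvd u a := by
  obtain ⟨u, rfl⟩ := hu
  exact ⟨↑u⁻¹ * a, (u.mul_inv_cancel_left a).symm⟩

theorem cancellativeMonoid_iff_isCancelMul : CancellativeMonoid M ↔ IsCancelMul M where
  mp h :=
    { mul_left_cancel := fun x y t hxy => h x y 1 t (by simpa using hxy)
      mul_right_cancel := fun z y t hyz => h 1 y z t (by simpa using hyz) }
  mpr _ _ _ _ _ h := mul_left_cancel (mul_right_cancel h)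

end Divisibility

section Opposite

open MulOpposite

variable {M : Type*} [Monoid M]

theorem ldvd_op_iff {a b : M} : LDvd (op a) (op b) ↔ RDvd a b := by
  simp only [LDvd, RDvd, op_surjective.exists, ← op_mul, op_inj]

theorem rdvd_op_iff {a b : M} : RDvd (op a) (op b) ↔ LDvd a b := by
  simp only [LDvd, RDvd, op_surjective.exists, ← op_mul, op_inj]

theorem isLcmL_op_iff {a b l : M} : IsLcmL (op a) (op b) (op l) ↔ IsLcmR a b l := by
  simp only [IsLcmL, IsLcmR, op_surjective.forall, ldvd_op_iff]

theorem LDiv_op (d : M) : LDiv (op d) = unop ⁻¹' RDiv d := by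
  ext a
  exact ldvd_op_iff (a := unop a)

theorem RDiv_op (d : M) : RDiv (op d) = unop ⁻¹' LDiv d := by
  ext a
  exact rdvd_op_iff (a := unop a)

theorem balancedElem_op {d : M} (hd : BalancedElem d) : BalancedElem (op d) := by
  rw [BalancedElem, LDiv_op, RDiv_op, hd]

end Opposite

section Lcm

variable {M : Type*} [Monoid M]

theorem IsLcmL.symm {a b l : M} (h : IsLcmL a b l) : IsLcmL b a l :=
  ⟨h.2.1, h.1, fun m hb ha => h.2.2 m ha hb⟩

theorem isLcmL_one_left (a : M) : IsLcmL 1 a a :=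
  ⟨ldvd_of_isUnit isUnit_one a, dvd_rfl, fun _ _ h => h⟩

theorem IsLcmL.mul_left [IsLeftCancelMul M] {x₁ x₂ y c c' : M}
    (h₁ : IsLcmL x₁ y (x₁ * c)) (h₂ : IsLcmL x₂ c (x₂ * c')) :
    IsLcmL (x₁ * x₂) y (x₁ * x₂ * c') := by
  refine ⟨⟨c', rfl⟩, ?_, ?_⟩
  · rw [mul_assoc]
    exact h₁.2.1.trans (ldvd_mul_left_iff.2 h₂.2.1)
  · rintro m ⟨f, rfl⟩ hy
    rw [mul_assoc] at hy ⊢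
    have hc : LDvd c (x₂ * f) :=
      ldvd_mul_left_iff.1 (h₁.2.2 _ ⟨x₂ * f, rfl⟩ hy)
    rw [mul_assoc, ldvd_mul_left_iff]
    exact h₂.2.2 _ ⟨f, rfl⟩ hc

/-- Every `x ∈ S` and `y ∈ T` have a right lcm `x * c = y * d` whose complements satisfy `c ∈ T` and
`d ∈ S`. Separate sets for the two sides allow lcm squares to be pasted in one direction at a
time. -/
def HasLcmComplements (S T : Set M) : Prop :=
  ∀ x ∈ S, ∀ y ∈ T, ∃ c ∈ T, ∃ d ∈ S, x * c = y * d ∧ IsLcmL x y (x * c)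

namespace HasLcmComplements

variable {S T : Set M}

theorem symm (h : HasLcmComplements S T) : HasLcmComplements T S := by
  intro y hy x hx
  obtain ⟨c, hc, d, hd, hcd, hl⟩ := h x hx y hy
  exact ⟨d, hd, c, hc, hcd.symm, hcd ▸ hl.symm⟩

theorem closure_left [IsLeftCancelMul M] (h : HasLcmComplements S T) :
    HasLcmComplements (Submonoid.closure S : Set M) T := by
  intro x hx
  induction hx using Submonoid.closure_induction with
  | mem x hx =>
    intro y hy
    obtain ⟨c, hc, d, hd, hl⟩ := h x hx y hy
    exact ⟨c, hc, d, Submonoid.subset_closure hd, hl⟩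
  | one =>
    intro y hy
    exact ⟨y, hy, 1, one_mem _, by rw [one_mul, mul_one], by simpa using isLcmL_one_left y⟩
  | mul x₁ x₂ _ _ ih₁ ih₂ =>
    intro y hy
    obtain ⟨c, hc, d, hd, hcd, hl⟩ := ih₁ y hy
    obtain ⟨c', hc', d', hd', hcd', hl'⟩ := ih₂ c hc
    have hsquare : x₁ * x₂ * c' = y * (d * d') := by
      rw [mul_assoc, hcd', ← mul_assoc, hcd, mul_assoc]
    exact ⟨c', hc', d * d', mul_mem hd hd', hsquare, hl.mul_left hl'⟩

theorem closure [IsLeftCancelMul M] (h : HasLcmComplements S T) :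
    HasLcmComplements (Submonoid.closure S : Set M) (Submonoid.closure T) :=
  h.closure_left.symm.closure_left.symm

end HasLcmComplements

theorem BalancedElem.hasLcmComplements {δ : M} (hδ : BalancedElem δ)
    (hlcm : ∀ a ∈ LDiv δ, ∀ b ∈ LDiv δ, ∃ l, IsLcmL a b l) :
    HasLcmComplements (LDiv δ) (LDiv δ) := by
  have right_factor_mem {x c : M} (h : x * c ∈ LDiv δ) : c ∈ LDiv δ := by
    rw [hδ] at h ⊢
    obtain ⟨k, hk⟩ := h
    exact ⟨k * x, by rw [hk, mul_assoc]⟩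
  intro x hx y hy
  obtain ⟨l, hl⟩ := hlcm x hx y hy
  have hlδ : l ∈ LDiv δ := hl.2.2 δ hx hy
  obtain ⟨c, rfl⟩ := hl.1
  obtain ⟨d, hd⟩ := hl.2.1
  exact ⟨c, right_factor_mem hlδ, d, right_factor_mem (hd ▸ hlδ), hd, hl⟩

end Lcm

/-- An embedding of monoids whose image contains the units and is closed under right lcms and their
complements. Homomorphisms are used rather than submonoids so that the notion can be applied to
`f.op`, which gives the corresponding facts about right divisibility. -/
structure IsLcmEmbedding {N M : Type*} [Monoid N] [Monoid M] (f : N →* M) : Prop where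
  injective : Function.Injective f
  mem_range_of_isUnit : ∀ u : M, IsUnit u → u ∈ Set.range f
  hasLcmComplements : HasLcmComplements (Set.range f) (Set.range f)

section LcmEmbedding

open MulOpposite

variable {N M : Type*} [Monoid N] [Monoid M] {f : N →* M}

theorem LDvd.map (f : N →* M) {a b : N} (h : LDvd a b) : LDvd (f a) (f b) :=
  map_dvd f h

namespace IsLcmEmbedding

theorem ldvd_map_iff [IsLeftCancelMul M] (hf : IsLcmEmbedding f) {a b : N} :
    LDvd (f a) (f b) ↔ LDvd a b := by
  refine ⟨fun hab => ?_, LDvd.map f⟩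
  -- The lcm of `f a` and its multiple `f b` is `f b` up to a unit, and that unit lies in the image.
  obtain ⟨_, ⟨c, rfl⟩, d, -, hcd, hl⟩ := hf.hasLcmComplements _ ⟨a, rfl⟩ _ ⟨b, rfl⟩
  obtain ⟨e, he⟩ : LDvd (f a * f c) (f b) := hl.2.2 _ hab dvd_rfl
  have hde : d * e = 1 := by
    rw [hcd, mul_assoc] at he
    exact mul_eq_left.1 he.symm
  obtain ⟨u, rfl⟩ := hf.mem_range_of_isUnit e (IsUnit.of_mul_eq_one_right d hde)
  exact ⟨c * u, hf.injective (by rw [he, map_mul, map_mul, mul_assoc])⟩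

theorem exists_isLcmL [IsLeftCancelMul M] (hf : IsLcmEmbedding f) (a b : N) :
    ∃ l, IsLcmL a b l := by
  obtain ⟨_, ⟨c, rfl⟩, -, -, -, hl⟩ := hf.hasLcmComplements _ ⟨a, rfl⟩ _ ⟨b, rfl⟩
  rw [← map_mul] at hl
  exact ⟨a * c, hf.ldvd_map_iff.1 hl.1, hf.ldvd_map_iff.1 hl.2.1,
    fun m ha hb => hf.ldvd_map_iff.1 (hl.2.2 _ (ha.map f) (hb.map f))⟩

theorem rdvd_map_iff [IsRightCancelMul M] (hf : IsLcmEmbedding f.op) {a b : N} :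
    RDvd (f a) (f b) ↔ RDvd a b := by
  rw [← ldvd_op_iff, ← ldvd_op_iff, ← hf.ldvd_map_iff]
  rfl

theorem exists_isLcmR [IsRightCancelMul M] (hf : IsLcmEmbedding f.op) (a b : N) :
    ∃ l, IsLcmR a b l := by
  simpa only [op_surjective.exists, isLcmL_op_iff] using hf.exists_isLcmL (op a) (op b)

end IsLcmEmbedding

theorem NoetherianMonoid.of_isLcmEmbedding [IsCancelMul M] (hM : NoetherianMonoid M)
    (hf : IsLcmEmbedding f) (hf_op : IsLcmEmbedding f.op) : NoetherianMonoid N := by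
  simp only [NoetherianMonoid, ← hf.ldvd_map_iff, ← hf_op.rdvd_map_iff]
  exact ⟨InvImage.wf f hM.1, InvImage.wf f hM.2⟩

theorem LocallyGarside.of_isLcmEmbedding [IsCancelMul M]
    (hM : NoetherianMonoid M) (hf : IsLcmEmbedding f) (hf_op : IsLcmEmbedding f.op) :
    LocallyGarside N :=
  ⟨cancellativeMonoid_iff_isCancelMul.2 (hf.injective.isCancelMul f (map_mul f)),
    hM.of_isLcmEmbedding hf hf_op,
    fun a b => ⟨fun _ => hf.exists_isLcmL a b, fun ⟨l, hl⟩ => ⟨l, hl.1, hl.2.1⟩⟩,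
    fun a b => ⟨fun _ => hf_op.exists_isLcmR a b, fun ⟨l, hl⟩ => ⟨l, hl.1, hl.2.1⟩⟩⟩

theorem BalancedElem.of_map [IsCancelMul M] (hf : IsLcmEmbedding f) (hf_op : IsLcmEmbedding f.op)
    {d : N} (hd : BalancedElem (f d)) : BalancedElem d := by
  ext a
  exact hf.ldvd_map_iff.symm.trans ((Set.ext_iff.1 hd (f a)).trans hf_op.rdvd_map_iff)

theorem BalancedElem.isLcmEmbedding [IsLeftCancelMul M] {δ : M} (hδ : BalancedElem δ)
    (hlcm : ∀ a ∈ LDiv δ, ∀ b ∈ LDiv δ, ∃ l, IsLcmL a b l) (hf : Function.Injective f)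
    (hrange : Set.range f = Submonoid.closure (LDiv δ)) : IsLcmEmbedding f where
  injective := hf
  mem_range_of_isUnit _ hu := hrange ▸ Submonoid.subset_closure (ldvd_of_isUnit hu δ)
  hasLcmComplements := hrange ▸ (hδ.hasLcmComplements hlcm).closure

end LcmEmbedding

section DivisorSubmonoid

open MulOpposite

variable {M : Type*} [Monoid M] {δ : M}

theorem BalancedElem.isLcmEmbedding_subtype [IsLeftCancelMul M] (hδ : BalancedElem δ)
    (hlcm : ∀ a ∈ LDiv δ, ∀ b ∈ LDiv δ, ∃ l, IsLcmL a b l) :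
    IsLcmEmbedding (Submonoid.closure (LDiv δ)).subtype :=
  hδ.isLcmEmbedding hlcm Subtype.val_injective Subtype.range_coe

theorem BalancedElem.isLcmEmbedding_subtype_op [IsRightCancelMul M] (hδ : BalancedElem δ)
    (hlcm : ∀ a ∈ LDiv δ, ∀ b ∈ LDiv δ, ∃ l, IsLcmR a b l) :
    IsLcmEmbedding (Submonoid.closure (LDiv δ)).subtype.op := by
  have hLDiv : LDiv (op δ) = unop ⁻¹' LDiv δ := by rw [LDiv_op, hδ]
  refine (balancedElem_op hδ).isLcmEmbedding ?_ (fun a b h => ?_) ?_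
  · simpa only [hLDiv, Set.mem_preimage, unop_op, op_surjective.forall,
      op_surjective.exists, isLcmL_op_iff] using hlcm
  · exact unop_injective (Subtype.val_injective (op_injective h))
  · rw [hLDiv, ← Submonoid.op_closure]
    ext a
    exact ⟨fun ⟨b, hb⟩ => hb ▸ (unop b).2, fun ha => ⟨op ⟨unop a, ha⟩, rfl⟩⟩

theorem parabolic_submonoid_garside_general (hcanc : CancellativeMonoid M)
    (hnoeth : NoetherianMonoid M) (hδbal : BalancedElem δ)
    (hlcms : ∀ a ∈ LDiv δ, ∀ b ∈ LDiv δ, (∃ l, IsLcmL a b l) ∧ (∃ l, IsLcmR a b l)) :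
    IsGarsideMonoidWith
      (⟨δ, Submonoid.subset_closure ⟨1, (mul_one δ).symm⟩⟩ :
        Submonoid.closure (LDiv δ)) := by
  have : IsCancelMul M := cancellativeMonoid_iff_isCancelMul.1 hcanc
  have hleft := hδbal.isLcmEmbedding_subtype fun a ha b hb => (hlcms a ha b hb).1
  have hright := hδbal.isLcmEmbedding_subtype_op fun a ha b hb => (hlcms a ha b hb).2
  refine ⟨.of_isLcmEmbedding hnoeth hleft hright, .of_map hleft hright hδbal, ?_⟩
  rw [← Submonoid.closure_closure_coe_preimage (s := LDiv δ)]
  congr 1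
  ext a
  exact hleft.ldvd_map_iff.symm

end DivisorSubmonoid

/-- if `M` is a cancellative noetherian monoid whose left and right
divisibilities are partial orders, with Garside element `Δ`, and `δ ∈ Div(Δ)` is
balanced with `M_δ ∩ Div(Δ) = Div(δ)` where `M_δ` is the submonoid generated by
`Div(δ)`, then `M_δ` is itself a Garside monoid with Garside element `δ`. -/
theorem parabolic_submonoid_garside {M : Type*} [Monoid M]
    (hcanc : CancellativeMonoid M) (hnoeth : NoetherianMonoid M)
    (hLantisymm : ∀ a b : M, LDvd a b → LDvd b a → a = b)
    (hRantisymm : ∀ a b : M, RDvd a b → RDvd b a → a = b)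
    (Δ : M) (hGarside : IsGarsideMonoidWith Δ)
    (hlcms : ∀ a ∈ LDiv Δ, ∀ b ∈ LDiv Δ, (∃ l, IsLcmL a b l) ∧ (∃ l, IsLcmR a b l))
    (δ : M) (hδΔ : δ ∈ LDiv Δ) (hδbal : BalancedElem δ)
    (hpar : (Submonoid.closure (LDiv δ) : Set M) ∩ LDiv Δ = LDiv δ) :
    IsGarsideMonoidWith
      (⟨δ, Submonoid.subset_closure ⟨1, (mul_one δ).symm⟩⟩ :
        Submonoid.closure (LDiv δ)) := by
  exact parabolic_submonoid_garside_general hcanc hnoeth hδbal fun a ha b hb =>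
    hlcms a (ha.trans hδΔ) b (hb.trans hδΔ)
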